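/- Let μ < 0 and λ < 0, and set γ = 2μ/λ > 0. Let a be a solution of the soliton ODE a′ = 2λa³ − 4μa² with 0 < a(t₀) < γ at some time t₀. Then a extends to a solution on [t₀, ∞), satisfies 0 < a(t) < γ there, is strictly increasing on [t₀, ∞), and a(t) → γ as t → ∞. -/

import Mathlib

open Set Filter

/-!
The equation reads `a' = k a² (γ - a)` with `k = -2λ > 0`. In the logistic coordinate `u` given by
`a = γ / (1 + e⁻ᵘ)`, which parametrises `0 < a < γ` by `u ∈ ℝ`, it becomes
`(u - e⁻ᵘ)' = k γ²`. The function `u ↦ u - e⁻ᵘ` is an increasing diffeomorphism of `ℝ`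
(`solitonIso`), so inverting it yields a solution defined for all times, with values in `(0, γ)`,
increasing, and tending to `γ` since `u → ∞`. The given solution agrees with it by Grönwall
uniqueness (`soliton_unique`): the difference `w` of two solutions satisfies `w' = q w` with `q`
continuous, hence bounded on compact intervals.
-/

lemma strictMono_sub_exp_neg : StrictMono (fun u : ℝ => u - Real.exp (-u)) := by
  intro x y h
  have : Real.exp (-y) < Real.exp (-x) := Real.exp_lt_exp.2 (by linarith)
  simp only
  linarith

lemma surjective_sub_exp_neg : Function.Surjective (fun u : ℝ => u - Real.exp (-u)) := by
  apply Continuous.surjective (by fun_prop)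
  · refine tendsto_atTop_mono' _ ?_ (tendsto_atTop_add_const_right _ (-1 : ℝ) tendsto_id)
    filter_upwards [eventually_ge_atTop 0] with u hu
    have : Real.exp (-u) ≤ 1 := Real.exp_le_one_iff.2 (by linarith)
    simp only [id]
    linarith
  · refine tendsto_atBot_mono (fun u => ?_) tendsto_id
    have := Real.exp_pos (-u)
    simp only [id]
    linarith

/-- The increasing bijection `u ↦ u - e⁻ᵘ` of `ℝ`, which linearises the soliton ODE in the
logistic coordinate. -/
noncomputable def solitonIso : ℝ ≃o ℝ :=
  StrictMono.orderIsoOfSurjective _ strictMono_sub_exp_neg surjective_sub_exp_neg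

lemma solitonIso_apply (u : ℝ) : solitonIso u = u - Real.exp (-u) := rfl

lemma hasDerivAt_solitonIso_symm (s : ℝ) :
    HasDerivAt solitonIso.symm (1 + Real.exp (-solitonIso.symm s))⁻¹ s := by
  refine HasDerivAt.of_local_left_inverse (f := solitonIso)
    solitonIso.symm.continuous.continuousAt ?_ ?_
    (Eventually.of_forall fun y => solitonIso.apply_symm_apply y)
  · have h := (hasDerivAt_id (solitonIso.symm s)).sub (hasDerivAt_id (solitonIso.symm s)).neg.exp
    refine HasDerivAt.congr_deriv (f := solitonIso) h ?_
    simp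
  · positivity

/-- Forward uniqueness for the soliton ODE on a half-open interval. -/
lemma soliton_unique (lam mu t₀ T : ℝ) (a b : ℝ → ℝ)
    (ha : ∀ t ∈ Ico t₀ T, HasDerivAt a (2 * lam * (a t) ^ 3 - 4 * mu * (a t) ^ 2) t)
    (hb : ∀ t ∈ Ico t₀ T, HasDerivAt b (2 * lam * (b t) ^ 3 - 4 * mu * (b t) ^ 2) t)
    (h : a t₀ = b t₀) : EqOn a b (Ico t₀ T) := by
  intro t ht
  have hsub : ∀ x ∈ Icc t₀ t, x ∈ Ico t₀ T := fun x hx => ⟨hx.1, hx.2.trans_lt ht.2⟩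
  have hac : ContinuousOn a (Icc t₀ t) := fun x hx =>
    (ha x (hsub x hx)).continuousAt.continuousWithinAt
  have hbc : ContinuousOn b (Icc t₀ t) := fun x hx =>
    (hb x (hsub x hx)).continuousAt.continuousWithinAt
  -- `q` is the quotient of the difference of the right-hand sides by `a - b`.
  have hq : ContinuousOn (fun x => 2 * lam * (a x ^ 2 + a x * b x + b x ^ 2)
      - 4 * mu * (a x + b x)) (Icc t₀ t) := by fun_prop
  obtain ⟨K, hK⟩ := isCompact_Icc.exists_bound_of_continuousOn hq
  have key := eq_zero_of_abs_deriv_le_mul_abs_self_of_eq_zero_right (K := K)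
    (f := fun x => a x - b x)
    (f' := fun x => (2 * lam * (a x) ^ 3 - 4 * mu * (a x) ^ 2)
      - (2 * lam * (b x) ^ 3 - 4 * mu * (b x) ^ 2)) (a := t₀) (b := t)
    (hac.sub hbc)
    (fun x hx => ((ha x (hsub x (Ico_subset_Icc_self hx))).sub
      (hb x (hsub x (Ico_subset_Icc_self hx)))).hasDerivWithinAt)
    (by simp [h])
    (fun x hx => by
      have h1 := mul_le_mul_of_nonneg_right (hK x (Ico_subset_Icc_self hx))
        (norm_nonneg (a x - b x))
      rw [← norm_mul] at h1
      refine le_trans (le_of_eq ?_) h1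
      congr 1
      ring)
  exact sub_eq_zero.1 (key t ⟨ht.1, le_rfl⟩)

/-- For `μ < 0`, `λ < 0` and `γ = 2μ/λ > 0`, a solution of the soliton ODE
`a' = 2λa³ - 4μa²` with `0 < a(t₀) < γ` extends to a solution on `[t₀, ∞)`
which satisfies `0 < a < γ` there, is strictly increasing, and tends to `γ`
at infinity. -/
theorem stmt_5 (lam mu : ℝ) (hmu : mu < 0) (hlam : lam < 0) (γ : ℝ)
    (hγ : γ = 2 * mu / lam) (t₀ T : ℝ) (hT : t₀ < T) (a : ℝ → ℝ)
    (hsol : ∀ t ∈ Set.Ico t₀ T,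
      HasDerivAt a (2 * lam * (a t) ^ 3 - 4 * mu * (a t) ^ 2) t)
    (h0 : 0 < a t₀) (h1 : a t₀ < γ) :
    ∃ b : ℝ → ℝ, Set.EqOn a b (Set.Ico t₀ T) ∧
      (∀ t ∈ Set.Ici t₀,
        HasDerivAt b (2 * lam * (b t) ^ 3 - 4 * mu * (b t) ^ 2) t ∧
        0 < b t ∧ b t < γ) ∧
      StrictMonoOn b (Set.Ici t₀) ∧
      Tendsto b atTop (nhds γ) := by
  have hγ0 : 0 < γ := h0.trans h1
  have hmu' : mu = lam * γ / 2 := by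
    have := hlam.ne
    rw [hγ]
    field_simp
  have hc : 0 < -2 * lam * γ ^ 2 := by
    have : 0 < -2 * lam := by linarith
    positivity
  -- `u₀` is the logistic coordinate of `a t₀`.
  obtain ⟨u₀, hu₀⟩ : ∃ u₀ : ℝ, γ / (1 + Real.exp (-u₀)) = a t₀ := by
    refine ⟨-Real.log (γ / a t₀ - 1), ?_⟩
    have : 0 < γ / a t₀ - 1 := by
      have := (one_lt_div h0).2 h1
      linarith
    rw [neg_neg, Real.exp_log this, add_sub_cancel, div_div_cancel₀ hγ0.ne']
  let s : ℝ → ℝ := fun t => -2 * lam * γ ^ 2 * (t - t₀) + solitonIso u₀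
  let u : ℝ → ℝ := fun t => solitonIso.symm (s t)
  have hs : ∀ t, HasDerivAt s (-2 * lam * γ ^ 2) t := fun t => by
    exact ((((hasDerivAt_id t).sub_const t₀).const_mul (-2 * lam * γ ^ 2)).add_const
      (solitonIso u₀)).congr_deriv (mul_one _)
  have hu : ∀ t, HasDerivAt u ((1 + Real.exp (-u t))⁻¹ * (-2 * lam * γ ^ 2)) t := fun t =>
    (hasDerivAt_solitonIso_symm (s t)).comp t (hs t)
  have hu0 : u t₀ = u₀ := by simp [u, s]
  have humono : StrictMono u := fun x y hxy => solitonIso.symm.strictMono (by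
    have := mul_lt_mul_of_pos_left (sub_lt_sub_right hxy t₀) hc
    simp only [s]
    linarith)
  have hutop : Tendsto u atTop atTop :=
    solitonIso.symm.tendsto_atTop.comp (tendsto_atTop_add_const_right _ _
      ((tendsto_atTop_add_const_right _ (-t₀) tendsto_id).const_mul_atTop hc))
  have hder : ∀ t, HasDerivAt (fun t => γ / (1 + Real.exp (-u t)))
      (2 * lam * (γ / (1 + Real.exp (-u t))) ^ 3
        - 4 * mu * (γ / (1 + Real.exp (-u t))) ^ 2) t := fun t => by
    have hpos : 0 < 1 + Real.exp (-u t) := by positivity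
    refine ((hasDerivAt_const t γ).div ((hu t).neg.exp.const_add 1) hpos.ne').congr_deriv ?_
    rw [hmu']
    simp only [Pi.neg_apply]
    field_simp
    ring
  refine ⟨fun t => γ / (1 + Real.exp (-u t)), ?_, fun t _ => ⟨hder t, by positivity, ?_⟩, ?_, ?_⟩
  · exact soliton_unique lam mu t₀ T _ _ hsol (fun t _ => hder t) (by simp only [hu0, hu₀])
  · have := Real.exp_pos (-u t)
    exact div_lt_self hγ0 (by linarith)
  · intro x _ y _ hxy
    have : Real.exp (-u y) < Real.exp (-u x) := Real.exp_lt_exp.2 (neg_lt_neg (humono hxy))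
    exact div_lt_div_of_pos_left hγ0 (by positivity) (by linarith)
  · have he : Tendsto (fun t => Real.exp (-u t)) atTop (nhds 0) :=
      Real.tendsto_exp_neg_atTop_nhds_zero.comp hutop
    have hlim := (tendsto_const_nhds (x := γ)).div (he.const_add 1) (by norm_num)
    rw [add_zero, div_one] at hlim
    exact hlim
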